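/- Let w be a permutation of {1,…,n}, let δ ∈ GPDs(w), and suppose the pipes labelled p and q cross at two distinct cross tiles s and t of δ. Then the filling δ′ obtained from δ by replacing the cross tiles at both s and t with bump tiles, and interchanging the labels p and q on all pipe segments lying between s and t, is again an element of GPDs(w); moreover δ′ has exactly two fewer cross tiles and two more bump tiles than δ, all other tile counts being unchanged. -/

import Mathlib

open scoped Classical

namespace GPDpaper

/-- Raw data of a pipe-filling of the `n × n` grid: `d.1 i j` is the (optional) pipe label on
the vertical edge at row `i`, West of column `j` (so `d.1 i 0` is on the West boundary and
`d.1 i (Fin.last n)` on the East boundary); `d.2 i j` is the label on the horizontal edge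
North of row `i` in column `j` (so `d.2 0 j` is on the North boundary and
`d.2 (Fin.last n) j` on the South boundary).  Rows are numbered from the top. -/
abbrev Pipes (n : ℕ) :=
  (Fin n → Fin (n+1) → Option (Fin n)) × (Fin (n+1) → Fin n → Option (Fin n))

variable {n : ℕ}

/-- Label on the West edge of square `(i,j)`. -/
def We (d : Pipes n) (i j : Fin n) : Option (Fin n) := d.1 i j.castSucc
/-- Label on the East edge of square `(i,j)`. -/
def Ea (d : Pipes n) (i j : Fin n) : Option (Fin n) := d.1 i j.succ
/-- Label on the North edge of square `(i,j)`. -/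
def No (d : Pipes n) (i j : Fin n) : Option (Fin n) := d.2 i.castSucc j
/-- Label on the South edge of square `(i,j)`. -/
def So (d : Pipes n) (i j : Fin n) : Option (Fin n) := d.2 i.succ j

/-- The local condition making `d` a generic pipe dream: at each square, the pair of labels
leaving through the East and North edges is either `(W,S)` (cross/horizontal/vertical/blank
tile) or `(S,W)` (bump/elbow/blank tile); moreover two edges of the same square never carry
the same pipe label. -/
def IsValid (d : Pipes n) : Prop :=
  ∀ i j : Fin n,
    ((Ea d i j, No d i j) = (We d i j, So d i j) ∨
     (Ea d i j, No d i j) = (So d i j, We d i j)) ∧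
    (We d i j = So d i j → We d i j = none)

/-- The seven generic pipe dream tiles. -/
inductive Tile where
  | cross | bump | nw | se | horiz | vert | blank
deriving DecidableEq

/-- The tile of a pipe-filling at square `(i,j)`. -/
def tile (d : Pipes n) (i j : Fin n) : Tile :=
  match We d i j, So d i j with
  | some a, some _ => if Ea d i j = some a then .cross else .bump
  | some _, none => if No d i j = none then .horiz else .nw
  | none, some _ => if No d i j = none then .se else .vert
  | none, none => .blank

/-- `d` is a generic pipe dream for the permutation `w`: it is locally valid, the pipe
entering the West boundary in row `i` is labelled `i`, no pipes meet the East and South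
boundaries, and the pipe exiting the North boundary in column `j` is labelled `w⁻¹(j)`. -/
def IsGPDof (w : Equiv.Perm (Fin n)) (d : Pipes n) : Prop :=
  IsValid d ∧
  (∀ i : Fin n, d.1 i 0 = some i) ∧
  (∀ i : Fin n, d.1 i (Fin.last n) = none) ∧
  (∀ j : Fin n, d.2 (Fin.last n) j = none) ∧
  (∀ j : Fin n, d.2 0 j = some (w.symm j))

/-- Number of tiles of `d` of a given type. -/
noncomputable def tileCount (d : Pipes n) (t : Tile) : ℕ :=
  (Finset.univ.filter (fun p : Fin n × Fin n => tile d p.1 p.2 = t)).card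

/-- The pipes labelled `p` and `q` cross at the tile `(i,j)`. -/
def CrossesAt (d : Pipes n) (p q : Fin n) (i j : Fin n) : Prop :=
  tile d i j = .cross ∧
  ((We d i j = some p ∧ So d i j = some q) ∨ (We d i j = some q ∧ So d i j = some p))

/-- The number of tiles at which the pipes labelled `p` and `q` cross. -/
noncomputable def crossCount (d : Pipes n) (p q : Fin n) : ℕ :=
  (Finset.univ.filter (fun ij : Fin n × Fin n => CrossesAt d p q ij.1 ij.2)).card

/-- No two pipes of `d` cross each other at more than one tile. -/
def NoDoubleCross (d : Pipes n) : Prop := ∀ p q : Fin n, crossCount d p q ≤ 1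

/-- Number of inversions (Coxeter length) of a permutation. -/
def invCount (w : Equiv.Perm (Fin n)) : ℕ :=
  (Finset.univ.filter (fun p : Fin n × Fin n => p.1 < p.2 ∧ w p.2 < w p.1)).card

/-- Classic pipe dream (in 1-indexed terms: crosses and bumps for `i+j ≤ n`, NW-elbows on the
antidiagonal `i+j = n+1`, blanks below, and no two pipes crossing twice). -/
def IsClassic (d : Pipes n) : Prop :=
  (∀ i j : Fin n, (i : ℕ) + (j : ℕ) + 2 ≤ n → tile d i j = .cross ∨ tile d i j = .bump) ∧
  (∀ i j : Fin n, (i : ℕ) + (j : ℕ) + 2 = n + 1 → tile d i j = .nw) ∧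
  (∀ i j : Fin n, (i : ℕ) + (j : ℕ) + 2 > n + 1 → tile d i j = .blank) ∧
  NoDoubleCross d

/-- Bumpless-reduced: no bump tiles and no two pipes crossing twice. -/
def IsBumplessReduced (d : Pipes n) : Prop :=
  (∀ i j : Fin n, tile d i j ≠ .bump) ∧ NoDoubleCross d


/-- The filling obtained from `d` by applying the label-exchange `p ↔ q` to every edge lying
(strictly along the pipes) between the two crossing tiles `s` and `t`.  Since every pipe moves
East or North at each step, the quantity `j - i` (column minus row of the square being entered)
increases by exactly `1` along each pipe, so the edges strictly between `s` and `t` along the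
pipes `p` and `q` are exactly the edges bearing label `p` or `q` whose "level" lies in the
half-open interval `(min(λ s, λ t), max(λ s, λ t)]`, where `λ (i,j) = j - i`; the level of the
vertical edge `(i,j)` is `j - i` and that of the horizontal edge `(i,j)` is `j - i + 1`. -/
noncomputable def swapBetween (d : Pipes n) (p q : Fin n) (s t : Fin n × Fin n) : Pipes n :=
  let lo : ℤ := min (((s.2 : ℕ) : ℤ) - ((s.1 : ℕ) : ℤ)) (((t.2 : ℕ) : ℤ) - ((t.1 : ℕ) : ℤ))
  let hi : ℤ := max (((s.2 : ℕ) : ℤ) - ((s.1 : ℕ) : ℤ)) (((t.2 : ℕ) : ℤ) - ((t.1 : ℕ) : ℤ))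
  (fun i j =>
      if lo < ((j : ℕ) : ℤ) - ((i : ℕ) : ℤ) ∧ ((j : ℕ) : ℤ) - ((i : ℕ) : ℤ) ≤ hi then
        (d.1 i j).map (Equiv.swap p q) else d.1 i j,
   fun i j =>
      if lo < ((j : ℕ) : ℤ) - ((i : ℕ) : ℤ) + 1 ∧ ((j : ℕ) : ℤ) - ((i : ℕ) : ℤ) + 1 ≤ hi then
        (d.2 i j).map (Equiv.swap p q) else d.2 i j)

/-!
Order the squares of the grid by their level, column minus row.  Since pipes only move East or
North, the level grows by one from each square of a pipe to the next, so the squares entered by a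
pipe form a chain with at most one square on each level.  Exchanging `p` and `q` between `s` and `t`
relabels all edges of one level by the same permutation, which changes only when passing the levels
of `s` and `t`; the only squares on these levels entered by `p` or `q` are `s` and `t` themselves.
So every other square merely has its labels permuted, while at `s` and `t` the two outgoing labels
are interchanged relative to the incoming ones, which turns the cross into a bump.
-/

section Labels

variable {d d' : Pipes n} {a p q : Fin n} {x : Fin n × Fin n}

/-- The local condition of `IsValid` at the single square `x`. -/
def ValidAt (d : Pipes n) (x : Fin n × Fin n) : Prop :=
  ((Ea d x.1 x.2, No d x.1 x.2) = (We d x.1 x.2, So d x.1 x.2) ∨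
   (Ea d x.1 x.2, No d x.1 x.2) = (So d x.1 x.2, We d x.1 x.2)) ∧
  (We d x.1 x.2 = So d x.1 x.2 → We d x.1 x.2 = none)

theorem IsValid.validAt (hd : IsValid d) (x : Fin n × Fin n) : ValidAt d x := hd x.1 x.2

/-- The pipe labelled `a` enters the square `x`, from the West or from the South. -/
def Enters (d : Pipes n) (a : Fin n) (x : Fin n × Fin n) : Prop :=
  We d x.1 x.2 = some a ∨ So d x.1 x.2 = some a

theorem ValidAt.exits_iff_enters (hx : ValidAt d x) :
    (Ea d x.1 x.2 = some a ∨ No d x.1 x.2 = some a) ↔ Enters d a x := by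
  obtain ⟨h | h, -⟩ := hx <;> obtain ⟨hE, hN⟩ := Prod.mk.inj h <;> rw [hE, hN, Enters]
  exact or_comm

theorem ValidAt.not_exits_both (hx : ValidAt d x) :
    ¬ (Ea d x.1 x.2 = some a ∧ No d x.1 x.2 = some a) := by
  obtain ⟨h, hne⟩ := hx
  simp only [Prod.mk.injEq] at h
  grind

theorem CrossesAt.symm (h : CrossesAt d p q x.1 x.2) : CrossesAt d q p x.1 x.2 :=
  ⟨h.1, h.2.symm⟩

theorem CrossesAt.enters_left (h : CrossesAt d p q x.1 x.2) : Enters d p x :=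
  h.2.imp And.left And.right

theorem CrossesAt.enters_of_mem (h : CrossesAt d p q x.1 x.2) (ha : a = p ∨ a = q) :
    Enters d a x := by
  rcases ha with rfl | rfl
  exacts [h.enters_left, h.symm.enters_left]

theorem ValidAt.goes_straight_of_tile_eq_cross (hx : ValidAt d x)
    (h : tile d x.1 x.2 = .cross) :
    Ea d x.1 x.2 = We d x.1 x.2 ∧ No d x.1 x.2 = So d x.1 x.2 := by
  obtain ⟨hEN, -⟩ := hx
  simp only [Prod.mk.injEq] at hEN
  unfold tile at h
  grind

theorem tile_eq_of_labels_map {f : Fin n → Fin n} (hf : f.Injective)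
    (hW : We d' x.1 x.2 = (We d x.1 x.2).map f) (hS : So d' x.1 x.2 = (So d x.1 x.2).map f)
    (hE : Ea d' x.1 x.2 = (Ea d x.1 x.2).map f) (hN : No d' x.1 x.2 = (No d x.1 x.2).map f) :
    tile d' x.1 x.2 = tile d x.1 x.2 := by
  unfold tile
  rw [hW, hS, hE, hN]
  cases We d x.1 x.2 <;> cases So d x.1 x.2 <;> cases Ea d x.1 x.2 <;> simp [hf.eq_iff]

theorem ValidAt.of_labels_map (hx : ValidAt d x) {f : Fin n → Fin n} (hf : f.Injective)
    (hW : We d' x.1 x.2 = (We d x.1 x.2).map f) (hS : So d' x.1 x.2 = (So d x.1 x.2).map f)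
    (hE : Ea d' x.1 x.2 = (Ea d x.1 x.2).map f) (hN : No d' x.1 x.2 = (No d x.1 x.2).map f) :
    ValidAt d' x := by
  unfold ValidAt at hx ⊢
  rw [hW, hS, hE, hN, (Option.map_injective hf).eq_iff, Option.map_eq_none_iff]
  exact ⟨hx.1.imp (congrArg (Prod.map (Option.map f) (Option.map f)))
    (congrArg (Prod.map (Option.map f) (Option.map f))), hx.2⟩

end Labels

section Level

variable {d : Pipes n} {w : Equiv.Perm (Fin n)} {a : Fin n} {x y z : Fin n × Fin n}

/-- Column minus row.  The West and South edges of a square have the level of the square, its East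
and North edges the next level. -/
def level (x : Fin n × Fin n) : ℤ := ((x.2 : ℕ) : ℤ) - ((x.1 : ℕ) : ℤ)

/-- The square in the first column through which the pipe labelled `a` enters the grid. -/
def startSquare (a : Fin n) : Fin n × Fin n := (a, ⟨0, a.pos⟩)

/-- One move of the pipe labelled `a` from a square to its East or North neighbour. -/
inductive PipeStep (d : Pipes n) (a : Fin n) : Fin n × Fin n → Fin n × Fin n → Prop
  | east {x y : Fin n × Fin n} (hrow : x.1 = y.1) (hcol : (x.2 : ℕ) + 1 = y.2)
      (hexit : Ea d x.1 x.2 = some a) : PipeStep d a x y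
  | north {x y : Fin n × Fin n} (hrow : (x.1 : ℕ) = y.1 + 1) (hcol : x.2 = y.2)
      (hexit : No d x.1 x.2 = some a) : PipeStep d a x y

theorem PipeStep.level_eq (h : PipeStep d a x y) : level y = level x + 1 := by
  cases h <;> simp only [level] <;> omega

theorem IsValid.rightUnique_pipeStep (hd : IsValid d) : Relator.RightUnique (PipeStep d a) := by
  rintro x y z (⟨hi, hj, hE⟩ | ⟨hi, hj, hN⟩) (⟨hi', hj', hE'⟩ | ⟨hi', hj', hN'⟩)
  · exact Prod.ext (hi.symm.trans hi') (Fin.ext (hj.symm.trans hj'))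
  · exact ((hd.validAt x).not_exits_both ⟨hE, hN'⟩).elim
  · exact ((hd.validAt x).not_exits_both ⟨hE', hN⟩).elim
  · exact Prod.ext (Fin.ext (Nat.succ_injective (hi.symm.trans hi'))) (hj.symm.trans hj')

theorem eq_or_level_lt_of_reflTransGen (h : Relation.ReflTransGen (PipeStep d a) x y) :
    x = y ∨ level x < level y := by
  induction h with
  | refl => exact .inl rfl
  | tail _ hstep ih =>
    have := hstep.level_eq
    rcases ih with rfl | h <;> right <;> omega

theorem Enters.eq_startSquare_or_exists_pipeStep (hd : IsGPDof w d) (hy : Enters d a y) :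
    y = startSquare a ∨ ∃ x, Enters d a x ∧ PipeStep d a x y := by
  obtain ⟨hvalid, hwest, -, hsouth, -⟩ := hd
  obtain ⟨i, j⟩ := y
  rcases hy with hW | hS
  · rcases j with ⟨_ | j, hj⟩
    · left
      obtain rfl : i = a := Option.some.inj ((hwest i).symm.trans hW)
      rfl
    · right
      have hE : Ea d i ⟨j, by omega⟩ = some a := hW
      exact ⟨(i, ⟨j, by omega⟩), (hvalid.validAt _).exits_iff_enters.1 (.inl hE), .east rfl rfl hE⟩
  · right
    have hi : (i : ℕ) + 1 < n := by
      by_contra! h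
      have hlast : i.succ = Fin.last n := Fin.ext (by simp; omega)
      simp [So, hlast, hsouth] at hS
    have hN : No d ⟨i + 1, hi⟩ j = some a := hS
    exact ⟨(⟨i + 1, hi⟩, j), (hvalid.validAt _).exits_iff_enters.1 (.inr hN), .north rfl rfl hN⟩

theorem Enters.reachable (hd : IsGPDof w d) (hy : Enters d a y) :
    Relation.ReflTransGen (PipeStep d a) (startSquare a) y := by
  induction hm : (level y + n).toNat generalizing y with
  | zero => simp only [level] at hm; omega
  | succ m ih =>
    rcases hy.eq_startSquare_or_exists_pipeStep hd with rfl | ⟨x, hx, hxy⟩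
    · exact .refl
    · have := hxy.level_eq
      exact (ih hx (by omega)).tail hxy

theorem Enters.neg_le_level (hd : IsGPDof w d) (hy : Enters d a y) : -((a : ℕ) : ℤ) ≤ level y := by
  have hstart : level (startSquare a) = -((a : ℕ) : ℤ) := by simp [level, startSquare]
  rcases eq_or_level_lt_of_reflTransGen (hy.reachable hd) with rfl | h <;> omega

theorem Enters.reachable_or_reachable (hd : IsGPDof w d) (hx : Enters d a x) (hy : Enters d a y) :
    Relation.ReflTransGen (PipeStep d a) x y ∨ Relation.ReflTransGen (PipeStep d a) y x :=
  (hx.reachable hd).total_of_right_unique hd.1.rightUnique_pipeStep (hy.reachable hd)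

theorem Enters.eq_of_level_eq (hd : IsGPDof w d) (hx : Enters d a x) (hy : Enters d a y)
    (h : level x = level y) : x = y := by
  rcases hx.reachable_or_reachable hd hy with hxy | hyx
  · exact (eq_or_level_lt_of_reflTransGen hxy).resolve_right h.not_lt
  · exact ((eq_or_level_lt_of_reflTransGen hyx).resolve_right h.not_gt).symm

theorem Enters.level_le_of_exits_north (hd : IsGPDof w d) (hy : Enters d a y) {k : Fin n}
    (hk : d.2 0 k = some a) : level y ≤ ((k : ℕ) : ℤ) := by
  let x : Fin n × Fin n := (⟨0, k.pos⟩, k)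
  have hlevel : level x = ((k : ℕ) : ℤ) := by simp [level, x]
  have hN : No d x.1 x.2 = some a := hk
  have hterminal : ∀ z, ¬ PipeStep d a x z := by
    rintro z (⟨-, -, hE⟩ | ⟨hrow, -, -⟩)
    · exact (hd.1.validAt x).not_exits_both ⟨hE, hN⟩
    · simp [x] at hrow
  have hx : Enters d a x := (hd.1.validAt x).exits_iff_enters.1 (.inr hN)
  rcases hx.reachable_or_reachable hd hy with hxy | hyx
  · rcases hxy.cases_head with rfl | ⟨z, hxz, -⟩
    · exact hlevel.le
    · exact (hterminal z hxz).elim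
  · rcases eq_or_level_lt_of_reflTransGen hyx with rfl | h <;> omega

end Level

section Relabel

variable {d : Pipes n} {w : Equiv.Perm (Fin n)} {σ : ℤ → Equiv.Perm (Fin n)} {p q : Fin n}
  {x : Fin n × Fin n}

/-- The filling obtained from `d` by applying the permutation `σ ℓ` to the labels of all edges of
level `ℓ`, for every `ℓ`. -/
def relabel (σ : ℤ → Equiv.Perm (Fin n)) (d : Pipes n) : Pipes n :=
  (fun i j => (d.1 i j).map (σ (((j : ℕ) : ℤ) - ((i : ℕ) : ℤ))),
   fun i j => (d.2 i j).map (σ (((j : ℕ) : ℤ) - ((i : ℕ) : ℤ) + 1)))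

theorem We_relabel : We (relabel σ d) x.1 x.2 = (We d x.1 x.2).map (σ (level x)) := rfl

theorem So_relabel : So (relabel σ d) x.1 x.2 = (So d x.1 x.2).map (σ (level x)) := by
  have : ((x.2 : ℕ) : ℤ) - ((x.1.succ : ℕ) : ℤ) + 1 = level x := by
    simp only [level, Fin.val_succ]; omega
  simp only [So, relabel, this]

theorem Ea_relabel : Ea (relabel σ d) x.1 x.2 = (Ea d x.1 x.2).map (σ (level x + 1)) := by
  have : ((x.2.succ : ℕ) : ℤ) - ((x.1 : ℕ) : ℤ) = level x + 1 := by
    simp only [level, Fin.val_succ]; omega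
  simp only [Ea, relabel, this]

theorem No_relabel : No (relabel σ d) x.1 x.2 = (No d x.1 x.2).map (σ (level x + 1)) := rfl

theorem ValidAt.relabel_of_eqOn (hx : ValidAt d x)
    (h : ∀ a, Enters d a x → σ (level x + 1) a = σ (level x) a) :
    ValidAt (relabel σ d) x ∧ tile (relabel σ d) x.1 x.2 = tile d x.1 x.2 := by
  have hE : Ea (relabel σ d) x.1 x.2 = (Ea d x.1 x.2).map (σ (level x)) :=
    Ea_relabel.trans <| Option.map_congr fun a ha => h a (hx.exits_iff_enters.1 (.inl ha))
  have hN : No (relabel σ d) x.1 x.2 = (No d x.1 x.2).map (σ (level x)) :=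
    No_relabel.trans <| Option.map_congr fun a ha => h a (hx.exits_iff_enters.1 (.inr ha))
  exact ⟨hx.of_labels_map (σ _).injective We_relabel So_relabel hE hN,
    tile_eq_of_labels_map (σ _).injective We_relabel So_relabel hE hN⟩

theorem CrossesAt.relabel_of_exchange (hx : ValidAt d x) (h : CrossesAt d p q x.1 x.2)
    (hpq : p ≠ q) (hp : σ (level x + 1) p = σ (level x) q)
    (hq : σ (level x + 1) q = σ (level x) p) :
    ValidAt (relabel σ d) x ∧ tile (relabel σ d) x.1 x.2 = .bump := by
  obtain ⟨hE, hN⟩ := hx.goes_straight_of_tile_eq_cross h.1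
  unfold ValidAt tile
  rw [We_relabel, So_relabel, Ea_relabel, No_relabel, hE, hN]
  rcases h.2 with ⟨hW, hS⟩ | ⟨hW, hS⟩ <;> simp [hW, hS, hp, hq, hpq, hpq.symm]

theorem IsGPDof.relabel (hd : IsGPDof w d) (hvalid : IsValid (relabel σ d))
    (hwest : ∀ a : Fin n, σ (-((a : ℕ) : ℤ)) a = a)
    (hnorth : ∀ k : Fin n, σ (((k : ℕ) : ℤ) + 1) (w.symm k) = w.symm k) :
    IsGPDof w (relabel σ d) := by
  obtain ⟨-, hW, hE, hS, hN⟩ := hd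
  refine ⟨hvalid, fun i => ?_, fun i => ?_, fun j => ?_, fun j => ?_⟩
  · simp [GPDpaper.relabel, hW, hwest]
  · simp [GPDpaper.relabel, hE]
  · simp [GPDpaper.relabel, hS]
  · simp [GPDpaper.relabel, hN, hnorth]

end Relabel

section SwapLevels

variable {d : Pipes n} {w : Equiv.Perm (Fin n)} {p q : Fin n} {k l m : ℤ} {s t x : Fin n × Fin n}

/-- The transposition of `p` and `q` on the levels strictly above one of `l`, `m` and at most the
other, and the identity on all other levels. -/
noncomputable def swapLevels (p q : Fin n) (l m k : ℤ) : Equiv.Perm (Fin n) :=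
  if k ∈ Set.uIoc l m then Equiv.swap p q else 1

theorem swapBetween_eq_relabel :
    swapBetween d p q s t = relabel (swapLevels p q (level s) (level t)) d := by
  have hmap : ∀ (k : ℤ) (o : Option (Fin n)),
      o.map (swapLevels p q (level s) (level t) k) =
        if k ∈ Set.uIoc (level s) (level t) then o.map (Equiv.swap p q) else o := by
    intro k o
    unfold swapLevels
    split_ifs <;> simp
  simp only [relabel, hmap]
  simp only [swapBetween, Set.uIoc, Set.mem_Ioc, level]

theorem swapLevels_of_le (hl : k ≤ l) (hm : k ≤ m) : swapLevels p q l m k = 1 :=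
  if_neg (by rw [Set.mem_uIoc]; omega)

theorem swapLevels_of_lt (hl : l < k) (hm : m < k) : swapLevels p q l m k = 1 :=
  if_neg (by rw [Set.mem_uIoc]; omega)

theorem swapLevels_apply_of_ne {a : Fin n} (hp : a ≠ p) (hq : a ≠ q) :
    swapLevels p q l m k a = a := by
  unfold swapLevels
  split_ifs
  · exact Equiv.swap_apply_of_ne_of_ne hp hq
  · rfl

theorem swapLevels_succ_of_ne (hl : k ≠ l) (hm : k ≠ m) :
    swapLevels p q l m (k + 1) = swapLevels p q l m k := by
  have : k + 1 ∈ Set.uIoc l m ↔ k ∈ Set.uIoc l m := by simp only [Set.mem_uIoc]; omega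
  simp only [swapLevels, this]

theorem swapLevels_succ_of_eq (hlm : l ≠ m) (hk : k = l ∨ k = m) :
    swapLevels p q l m (k + 1) = swapLevels p q l m k * Equiv.swap p q := by
  have : k + 1 ∈ Set.uIoc l m ↔ k ∉ Set.uIoc l m := by simp only [Set.mem_uIoc]; omega
  by_cases h : k ∈ Set.uIoc l m <;> simp [swapLevels, this, h]

theorem CrossesAt.level_ne (hd : IsGPDof w d) (hst : s ≠ t) (hs : CrossesAt d p q s.1 s.2)
    (ht : CrossesAt d p q t.1 t.2) : level s ≠ level t :=
  fun h => hst (hs.enters_left.eq_of_level_eq hd ht.enters_left h)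

theorem swapBetween_at_crossing (hd : IsGPDof w d) (hpq : p ≠ q) (hst : s ≠ t)
    (hs : CrossesAt d p q s.1 s.2) (ht : CrossesAt d p q t.1 t.2) (hx : x = s ∨ x = t) :
    ValidAt (swapBetween d p q s t) x ∧ tile (swapBetween d p q s t) x.1 x.2 = .bump := by
  have hcross : CrossesAt d p q x.1 x.2 := by rcases hx with rfl | rfl <;> assumption
  have hsucc := swapLevels_succ_of_eq (p := p) (q := q) (hs.level_ne hd hst ht)
    (hx.imp (congrArg level) (congrArg level))
  rw [swapBetween_eq_relabel]
  exact hcross.relabel_of_exchange (hd.1.validAt x) hpq (by simp [hsucc]) (by simp [hsucc])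

theorem swapBetween_off_crossings (hd : IsGPDof w d) (hs : CrossesAt d p q s.1 s.2)
    (ht : CrossesAt d p q t.1 t.2) (hxs : x ≠ s) (hxt : x ≠ t) :
    ValidAt (swapBetween d p q s t) x ∧
      tile (swapBetween d p q s t) x.1 x.2 = tile d x.1 x.2 := by
  rw [swapBetween_eq_relabel]
  refine (hd.1.validAt x).relabel_of_eqOn fun a hax => ?_
  by_cases ha : a = p ∨ a = q
  · rw [swapLevels_succ_of_ne (mt (hax.eq_of_level_eq hd (hs.enters_of_mem ha)) hxs)
      (mt (hax.eq_of_level_eq hd (ht.enters_of_mem ha)) hxt)]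
  · rw [not_or] at ha
    rw [swapLevels_apply_of_ne ha.1 ha.2, swapLevels_apply_of_ne ha.1 ha.2]

theorem IsGPDof.swapBetween (hd : IsGPDof w d) (hpq : p ≠ q) (hst : s ≠ t)
    (hs : CrossesAt d p q s.1 s.2) (ht : CrossesAt d p q t.1 t.2) :
    IsGPDof w (swapBetween d p q s t) := by
  have hvalid : IsValid (GPDpaper.swapBetween d p q s t) := fun i j => by
    by_cases hx : (i, j) = s ∨ (i, j) = t
    · exact (swapBetween_at_crossing hd hpq hst hs ht hx).1
    · rw [not_or] at hx
      exact (swapBetween_off_crossings hd hs ht hx.1 hx.2).1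
  rw [swapBetween_eq_relabel] at hvalid ⊢
  have hfix {k : ℤ} {a : Fin n}
      (h : a = p ∨ a = q → swapLevels p q (level s) (level t) k = 1) :
      swapLevels p q (level s) (level t) k a = a := by
    by_cases ha : a = p ∨ a = q
    · rw [h ha, Equiv.Perm.one_apply]
    · exact swapLevels_apply_of_ne (not_or.1 ha).1 (not_or.1 ha).2
  refine hd.relabel hvalid (fun a => hfix fun ha => ?_) (fun k => hfix fun ha => ?_)
  · exact swapLevels_of_le ((hs.enters_of_mem ha).neg_le_level hd)
      ((ht.enters_of_mem ha).neg_le_level hd)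
  · have hexit := hd.2.2.2.2 k
    exact swapLevels_of_lt
      (Int.lt_add_one_iff.2 ((hs.enters_of_mem ha).level_le_of_exits_north hd hexit))
      (Int.lt_add_one_iff.2 ((ht.enters_of_mem ha).level_le_of_exits_north hd hexit))

end SwapLevels

theorem tileCount_add_of_replace {d d' : Pipes n} {C : Finset (Fin n × Fin n)} {τ₁ τ₂ : Tile}
    (hC : ∀ x ∈ C, tile d x.1 x.2 = τ₁) (hC' : ∀ x ∈ C, tile d' x.1 x.2 = τ₂)
    (hoff : ∀ x ∉ C, tile d' x.1 x.2 = tile d x.1 x.2) (τ : Tile) :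
    tileCount d τ + (if τ₂ = τ then C.card else 0) =
      tileCount d' τ + (if τ₁ = τ then C.card else 0) := by
  have hC_sum : ∀ {e : Pipes n} {υ : Tile}, (∀ x ∈ C, tile e x.1 x.2 = υ) →
      ∑ x ∈ C, (if tile e x.1 x.2 = τ then 1 else 0) = if υ = τ then C.card else 0 := by
    intro e υ he
    rw [Finset.sum_congr rfl fun x hx => by rw [he x hx], Finset.sum_const]
    split_ifs <;> simp
  have hoff_sum : ∑ x ∈ Cᶜ, (if tile d' x.1 x.2 = τ then 1 else 0) =
      ∑ x ∈ Cᶜ, (if tile d x.1 x.2 = τ then 1 else 0) :=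
    Finset.sum_congr rfl fun x hx => by rw [hoff x (Finset.mem_compl.1 hx)]
  simp only [tileCount, Finset.card_filter, ← Finset.sum_add_sum_compl C, hoff_sum, hC_sum hC,
    hC_sum hC']
  ring

theorem statement9 {n : ℕ} (hn : 1 ≤ n) (w : Equiv.Perm (Fin n)) (d : Pipes n)
    (hd : IsGPDof w d) (p q : Fin n) (hpq : p ≠ q) (s t : Fin n × Fin n) (hst : s ≠ t)
    (hs : CrossesAt d p q s.1 s.2) (ht : CrossesAt d p q t.1 t.2) :
    IsGPDof w (swapBetween d p q s t) ∧
    tileCount d .cross = tileCount (swapBetween d p q s t) .cross + 2 ∧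
    tileCount (swapBetween d p q s t) .bump = tileCount d .bump + 2 ∧
    (∀ τ : Tile, τ ≠ .cross → τ ≠ .bump →
      tileCount (swapBetween d p q s t) τ = tileCount d τ) := by
  have hcount := tileCount_add_of_replace (d := d) (C := {s, t}) (τ₁ := .cross) (τ₂ := .bump)
    (by simp [hs.1, ht.1])
    (fun x hx => (swapBetween_at_crossing hd hpq hst hs ht (by simpa using hx)).2)
    (fun x hx => by
      simp only [Finset.mem_insert, Finset.mem_singleton, not_or] at hx
      exact (swapBetween_off_crossings hd hs ht hx.1 hx.2).2)
  simp only [Finset.card_pair hst] at hcount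
  refine ⟨hd.swapBetween hpq hst hs ht, by simpa using hcount .cross,
    by simpa using (hcount .bump).symm, fun τ hcross hbump => ?_⟩
  simpa [hcross.symm, hbump.symm] using (hcount τ).symm

end GPDpaper
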